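/- For every n ≥ 1, the unital k-subalgebra of End_k(M^{⊗n}) generated by the operators S₁,…,S_{n−1} alone has dimension equal to one half of the central binomial coefficient: its dimension D satisfies 2·D = binomial(2n, n). (This is the codimension c_{n,n}(M) of the polynomial identities of M regarded as an ∅-magma in the braided category of Yetter–Drinfel'd modules over kC₂.) -/

import Mathlib

/-!
Write `ū` for the complement of a word `u` (letters `a` and `b` exchanged), and let
`sgn u = (-1)^(sum of the positions of b in u)`. The linear map sending `u` to `sgn u • ū` commutes
with every `S_i`, since swapping two different adjacent letters changes the sum of positions by one,
while the signs of `S_i` on `u` and `ū` differ exactly when the two letters differ. So the algebra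
generated by the `S_i` lies in the span of the operators
`pairUnit k u v = E_{u,v} + sgn u * sgn v * E_{ū,v̄}` with `u`, `v` of equal weight: this span
contains `1` (`one_mem_span`) and is stable under left multiplication by the `S_i`
(`Sbraid_mul_pairUnit`).

Conversely, `S_i²` is diagonal, with entry `1` or `-1` according to whether the letters `i`, `i+1`
agree. As `2` is invertible, a product of idempotents `(1 ± S_i²)/2` is the projection
`pairUnit k v v` onto the span of `v`, `v̄` (`pairUnit_self_mem`). Multiplying by the `S_i` turns it
into `pairUnit k u v` for every rearrangement `u` of `v` (`pairUnit_mem`).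

Up to sign `pairUnit k u v` depends only on the pair `(u, v)` modulo simultaneous complement, and
the operators of different classes are linearly independent. Complement acts freely on the pairs of
words of equal weight, of which there are `∑ j, (N.choose j)^2 = (2 * N).choose N`, `N = n + 1`.
-/

noncomputable section

variable (k : Type*) [Field k]

/-- The coordinate model of the `n`-th tensor power `M^{⊗n}` of the `2`-dimensional space
`M = ⟨a,b⟩`: functions on the set of words `w : Fin n → Bool` (a word records, for each tensor
position, which of the two basis letters occurs there; `false` stands for `a`, `true` for `b`).
The basis word `u₁ ⊗ ⋯ ⊗ u_n` corresponds to the delta function at `w`. -/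
abbrev TP (n : ℕ) : Type _ := (Fin n → Bool) → k

/-- The basis vector of `M^{⊗n}` corresponding to the word `w` (a delta function). -/
def basisWord (n : ℕ) (w : Fin n → Bool) : TP k n := Pi.single w 1

/-- The operator `T_i` on `M^{⊗(n+1)}` swapping tensor positions `i` and `i+1`. -/
def Tswap (n : ℕ) (i : Fin n) : Module.End k (TP k (n + 1)) where
  toFun f := fun w => f (w ∘ Equiv.swap i.castSucc i.succ)
  map_add' _ _ := rfl
  map_smul' _ _ := rfl

/-- The operator `S_i` on `M^{⊗(n+1)}` applying the Yetter–Drinfel'd braiding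
`σ(a⊗a)=a⊗a`, `σ(a⊗b)=b⊗a`, `σ(b⊗a)=−(a⊗b)`, `σ(b⊗b)=b⊗b` in tensor positions `i`, `i+1`:
on a basis word it swaps the letters at positions `i`, `i+1` and multiplies by `−1` exactly
when the letter at position `i` is `b` and the letter at position `i+1` is `a`. -/
def Sbraid (n : ℕ) (i : Fin n) : Module.End k (TP k (n + 1)) where
  toFun f := fun w =>
    (if w i.castSucc = false ∧ w i.succ = true then (-1 : k) else 1) *
      f (w ∘ Equiv.swap i.castSucc i.succ)
  map_add' f g := by funext w; simp [mul_add]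
  map_smul' c f := by
    funext w
    simp only [Pi.smul_apply, smul_eq_mul, RingHom.id_apply]
    ring

/-! ### Words, signs and the operators `pairUnit` -/

/-- The complementary word, exchanging the letters `a` and `b`. -/
def flipWord {N : ℕ} (u : Fin N → Bool) : Fin N → Bool := fun j => !u j

/-- The weight of a word: the number of its letters `b`. -/
def wt {N : ℕ} (u : Fin N → Bool) : ℕ := Fintype.card {j // u j = true}

/-- The sign `(-1)` to the power of the sum of the positions of the letters `b`. -/
def sgn {N : ℕ} (u : Fin N → Bool) : k := ∏ j, if u j then (-1 : k) ^ (j : ℕ) else 1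

/-- The sign picked up by a word with letters `x`, `y` in adjacent positions which are swapped. -/
def ssgn (x y : Bool) : k := if x = true ∧ y = false then -1 else 1

/-- With `E_{u,v}` the matrix units, the operator `E_{u,v} + sgn u * sgn v * E_{ū,v̄}`. -/
def pairUnit {N : ℕ} (u v : Fin N → Bool) : Module.End k (TP k N) where
  toFun f := fun w => (if w = u then f v else 0) +
    (if w = flipWord u then sgn k u * sgn k v * f (flipWord v) else 0)
  map_add' f g := by funext w; simp only [Pi.add_apply]; split_ifs <;> ring
  map_smul' c f := by
    funext w
    simp only [Pi.smul_apply, smul_eq_mul, RingHom.id_apply]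
    split_ifs <;> ring

lemma pairUnit_apply {N : ℕ} (u v : Fin N → Bool) (f : TP k N) (w : Fin N → Bool) :
    pairUnit k u v f w = (if w = u then f v else 0) +
      (if w = flipWord u then sgn k u * sgn k v * f (flipWord v) else 0) := rfl

lemma flipWord_flipWord {N : ℕ} (u : Fin N → Bool) : flipWord (flipWord u) = u := by
  funext j; simp [flipWord]

lemma sgn_mul_self {N : ℕ} (u : Fin N → Bool) : sgn k u * sgn k u = 1 := by
  rw [sgn, ← Finset.prod_mul_distrib]
  refine Finset.prod_eq_one fun j _ => ?_
  split_ifs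
  · rw [← mul_pow]; simp
  · simp

lemma sgn_mul_flipWord {N : ℕ} (u : Fin N → Bool) :
    sgn k u * sgn k (flipWord u) = ∏ j : Fin N, (-1 : k) ^ (j : ℕ) := by
  rw [sgn, sgn, ← Finset.prod_mul_distrib]
  refine Finset.prod_congr rfl fun j _ => ?_
  cases h : u j <;> simp [flipWord, h]

lemma sgn_flipWord_mul {N : ℕ} (u v : Fin N → Bool) :
    sgn k (flipWord u) * sgn k (flipWord v) = sgn k u * sgn k v := by
  have h1 := sgn_mul_flipWord k u
  have h2 := sgn_mul_flipWord k v
  have h3 := sgn_mul_self k u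
  have h4 := sgn_mul_self k (flipWord v)
  rw [← h1] at h2
  linear_combination (-sgn k u * sgn k (flipWord v)) * h2 +
    (-sgn k (flipWord u) * sgn k (flipWord v)) * h3 + (sgn k u * sgn k v) * h4

/-- Swapping two different adjacent letters changes the sum of the positions of the `b`s by one. -/
lemma sgn_swap (n : ℕ) (u : Fin (n + 1) → Bool) (i : Fin n) :
    sgn k (u ∘ Equiv.swap i.castSucc i.succ) =
      (if u i.castSucc = u i.succ then 1 else -1) * sgn k u := by
  have h : sgn k (u ∘ Equiv.swap i.castSucc i.succ) * sgn k u =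
      if u i.castSucc = u i.succ then 1 else -1 := by
    have hre : sgn k (u ∘ Equiv.swap i.castSucc i.succ) =
        ∏ j, if u j then (-1 : k) ^ ((Equiv.swap i.castSucc i.succ j : Fin (n + 1)) : ℕ)
          else 1 := by
      rw [sgn, ← Equiv.prod_comp (Equiv.swap i.castSucc i.succ)]
      simp
    have hne : i.castSucc ≠ i.succ := Fin.castSucc_lt_succ.ne
    rw [hre, sgn, ← Finset.prod_mul_distrib, Fintype.prod_eq_mul i.castSucc i.succ hne]
    · have hp : (-1 : k) ^ (i : ℕ) * (-1 : k) ^ (i : ℕ) = 1 := by rw [← mul_pow]; simp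
      cases h1 : u i.castSucc <;> cases h2 : u i.succ <;> simp [pow_succ, hp]
    · rintro j ⟨h1, h2⟩
      rw [Equiv.swap_apply_of_ne_of_ne h1 h2]
      split_ifs
      · rw [← mul_pow]; simp
      · simp
  rw [← h, mul_assoc, sgn_mul_self, mul_one]

lemma pairUnit_flipWord {N : ℕ} (u v : Fin N → Bool) :
    pairUnit k (flipWord u) (flipWord v) = (sgn k u * sgn k v) • pairUnit k u v := by
  refine LinearMap.ext fun f => funext fun w => ?_
  have h1 := sgn_mul_self k u
  have h2 := sgn_mul_self k v
  simp only [LinearMap.smul_apply, Pi.smul_apply, pairUnit_apply, flipWord_flipWord, smul_eq_mul,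
    sgn_flipWord_mul]
  split_ifs
  · linear_combination (-f (flipWord v)) * h1 - (sgn k u) ^ 2 * f (flipWord v) * h2
  · linear_combination (-f (flipWord v)) * h1 - (sgn k u) ^ 2 * f (flipWord v) * h2
  · ring
  · ring

/-! ### Multiplication by the braiding operators -/

lemma Sbraid_apply (n : ℕ) (i : Fin n) (f : TP k (n + 1)) (w : Fin (n + 1) → Bool) :
    Sbraid k n i f w = ssgn k (w i.succ) (w i.castSucc) *
      f (w ∘ Equiv.swap i.castSucc i.succ) := by
  simp only [Sbraid, ssgn, LinearMap.coe_mk, AddHom.coe_mk, and_comm]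

lemma comp_swap_eq_iff {N : ℕ} (τ : Equiv.Perm (Fin N)) (hτ : τ * τ = 1) (u w : Fin N → Bool) :
    w ∘ τ = u ↔ w = u ∘ τ := by
  have h : ∀ j, τ (τ j) = j := fun j => by
    rw [← Equiv.Perm.mul_apply, hτ]; rfl
  constructor
  · rintro rfl; funext j; simp [h]
  · rintro rfl; funext j; simp [h]

/-- The `S_i` permute the operators `pairUnit k u v` up to sign; the factor `sgn` is chosen so that
the signs on the words `u` and `ū` match. -/
lemma Sbraid_mul_pairUnit (n : ℕ) (i : Fin n) (u v : Fin (n + 1) → Bool) :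
    Sbraid k n i * pairUnit k u v = ssgn k (u i.castSucc) (u i.succ) •
      pairUnit k (u ∘ Equiv.swap i.castSucc i.succ) v := by
  refine LinearMap.ext fun f => funext fun w => ?_
  have hc : flipWord (u ∘ Equiv.swap i.castSucc i.succ) =
      flipWord u ∘ Equiv.swap i.castSucc i.succ := rfl
  rw [Module.End.mul_apply, Sbraid_apply, LinearMap.smul_apply, Pi.smul_apply, pairUnit_apply,
    pairUnit_apply, hc, smul_eq_mul, mul_add, mul_add]
  simp only [comp_swap_eq_iff _ (Equiv.swap_mul_self _ _)]
  congr 1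
  · split_ifs with h
    · subst h; simp
    · simp
  · split_ifs with h
    · subst h
      rw [sgn_swap]
      cases h1 : u i.castSucc <;> cases h2 : u i.succ <;> simp [ssgn, flipWord, h1, h2]
    · simp

/-- The square of `S_i` is diagonal, with entry `1` or `-1` as the letters `i`, `i+1` agree or
differ. -/
lemma Sbraid_sq (n : ℕ) (i : Fin n) :
    Sbraid k n i * Sbraid k n i = Algebra.lmul k (TP k (n + 1))
      (fun w => if w i.castSucc = w i.succ then 1 else -1) := by
  refine LinearMap.ext fun f => funext fun w => ?_
  rw [Module.End.mul_apply, Sbraid_apply, Sbraid_apply]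
  have : (w ∘ Equiv.swap i.castSucc i.succ) ∘ Equiv.swap i.castSucc i.succ = w := by
    funext j; simp
  rw [this]
  cases h1 : w i.castSucc <;> cases h2 : w i.succ <;> simp [ssgn, h1, h2]

/-! ### The operators `pairUnit` lie in the algebra -/

/-- A word is determined up to complement by which of its adjacent letters agree. -/
lemma eq_or_eq_flipWord (n : ℕ) (u w : Fin (n + 1) → Bool)
    (h : ∀ i : Fin n, (w i.castSucc = w i.succ ↔ u i.castSucc = u i.succ)) :
    w = u ∨ w = flipWord u := by
  have key : ∀ j, (w j = u j ↔ w 0 = u 0) := by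
    intro j
    induction j using Fin.induction with
    | zero => rfl
    | succ i ih =>
      rw [← ih]
      have := h i
      revert this
      cases w i.castSucc <;> cases w i.succ <;> cases u i.castSucc <;> cases u i.succ <;> decide
  by_cases h0 : w 0 = u 0
  · exact Or.inl (funext fun j => (key j).2 h0)
  · refine Or.inr (funext fun j => ?_)
    have := mt (key j).1 h0
    exact Bool.eq_not.2 this

lemma ne_flipWord {n : ℕ} (u : Fin (n + 1) → Bool) : u ≠ flipWord u := fun h => by
  have := congrFun h 0
  simp [flipWord] at this

/-- The projection onto the span of the words `u`, `ū` is the product of the idempotents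
`(1 ± S_i²)/2`, the signs being read off from `u`. -/
lemma pairUnit_self_mem (h2 : (2 : k) ≠ 0) (n : ℕ) (u : Fin (n + 1) → Bool) :
    pairUnit k u u ∈ Algebra.adjoin k (Set.range (Sbraid k n)) := by
  set A := Algebra.adjoin k (Set.range (Sbraid k n))
  let B := A.comap (Algebra.lmul k (TP k (n + 1)))
  let e : Fin n → (Fin (n + 1) → Bool) → k :=
    fun i w => if w i.castSucc = w i.succ then 1 else -1
  have he : ∀ i, e i ∈ B := fun i => by
    change Algebra.lmul k (TP k (n + 1)) (e i) ∈ A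
    rw [← Sbraid_sq]
    exact mul_mem (Algebra.subset_adjoin ⟨i, rfl⟩) (Algebra.subset_adjoin ⟨i, rfl⟩)
  have hprod : ∏ i, ((2 : k)⁻¹ • (1 + e i u • e i)) ∈ B :=
    Subalgebra.prod_mem _ fun i _ =>
      Subalgebra.smul_mem _ (add_mem (one_mem _) (Subalgebra.smul_mem _ (he i) _)) _
  have hval : ∀ w, (∏ i, ((2 : k)⁻¹ • (1 + e i u • e i))) w =
      if w = u ∨ w = flipWord u then 1 else 0 := by
    intro w
    have h22 : (2 : k)⁻¹ * (1 + 1) = 1 := by rw [one_add_one_eq_two]; exact inv_mul_cancel₀ h2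
    rw [Finset.prod_apply]
    split_ifs with hw
    · refine Finset.prod_eq_one fun i _ => ?_
      have : e i w = e i u := by
        rcases hw with rfl | rfl
        · rfl
        · simp [e, flipWord]
      simp only [Pi.smul_apply, Pi.add_apply, Pi.one_apply, smul_eq_mul, this]
      have hsq : e i u * e i u = 1 := by simp only [e]; split_ifs <;> simp
      rw [hsq, h22]
    · have hex : ∃ i : Fin n, ¬ (w i.castSucc = w i.succ ↔ u i.castSucc = u i.succ) := by
        by_contra! hcon
        exact hw (eq_or_eq_flipWord n u w hcon)
      obtain ⟨i, hi⟩ := hex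
      refine Finset.prod_eq_zero (Finset.mem_univ i) ?_
      simp only [Pi.smul_apply, Pi.add_apply, Pi.one_apply, smul_eq_mul, e]
      by_cases h3 : w i.castSucc = w i.succ <;> by_cases h4 : u i.castSucc = u i.succ <;>
        simp_all
  have : pairUnit k u u =
      Algebra.lmul k (TP k (n + 1)) (∏ i, ((2 : k)⁻¹ • (1 + e i u • e i))) := by
    refine LinearMap.ext fun f => funext fun w => ?_
    rw [pairUnit_apply, sgn_mul_self, Algebra.coe_lmul_eq_mul, LinearMap.mul_apply_apply,
      Pi.mul_apply, hval]
    by_cases h1 : w = u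
    · subst h1; simp [ne_flipWord]
    · by_cases h3 : w = flipWord u
      · subst h3; simp [(ne_flipWord u).symm]
      · simp [h1, h3]
  rw [this]
  exact hprod

lemma exists_perm_of_wt_eq {N : ℕ} {u v : Fin N → Bool} (h : wt u = wt v) :
    ∃ π : Equiv.Perm (Fin N), v ∘ π = u := by
  let e : {j // u j = true} ≃ {j // v j = true} := Fintype.equivOfCardEq h
  refine ⟨e.extendSubtype, funext fun j => ?_⟩
  cases hj : u j
  · simpa using e.extendSubtype_not_mem j (by simp [hj])
  · exact e.extendSubtype_mem j hj

lemma wt_comp_perm {N : ℕ} (u : Fin N → Bool) (π : Equiv.Perm (Fin N)) : wt (u ∘ π) = wt u :=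
  Fintype.card_congr (π.subtypeEquiv fun _ => Iff.rfl)

lemma wt_flipWord {N : ℕ} (u : Fin N → Bool) : wt (flipWord u) = N - wt u := by
  have := Fintype.card_subtype_compl (fun j => u j = true)
  rw [Fintype.card_fin] at this
  rw [wt, wt, ← this]
  exact Fintype.card_congr (Equiv.subtypeEquivRight fun j => by simp [flipWord])

/-- All `pairUnit k u v` with `wt u = wt v` lie in the algebra: start from the projection
`pairUnit k v v` and move `v` to `u` by adjacent transpositions, multiplying by the `S_i`. -/
lemma pairUnit_mem (h2 : (2 : k) ≠ 0) (n : ℕ) {u v : Fin (n + 1) → Bool} (h : wt u = wt v) :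
    pairUnit k u v ∈ Algebra.adjoin k (Set.range (Sbraid k n)) := by
  obtain ⟨π, rfl⟩ := exists_perm_of_wt_eq h
  clear h
  have hπ : π ∈ Submonoid.closure
      (Set.range fun i : Fin n ↦ Equiv.swap i.castSucc i.succ) := by
    rw [Equiv.Perm.mclosure_swap_castSucc_succ]; trivial
  induction hπ using Submonoid.closure_induction_right with
  | one => exact pairUnit_self_mem k h2 n v
  | mul_right x hx y hy ih =>
    obtain ⟨i, rfl⟩ := hy
    have hm := mul_mem (Algebra.subset_adjoin (R := k) (Set.mem_range_self i)) ih
    rw [Sbraid_mul_pairUnit] at hm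
    have hs : ssgn k ((v ∘ x) i.castSucc) ((v ∘ x) i.succ) *
        ssgn k ((v ∘ x) i.castSucc) ((v ∘ x) i.succ) = 1 := by
      simp only [ssgn]; split_ifs <;> simp
    have hmem := Subalgebra.smul_mem _ hm (ssgn k ((v ∘ x) i.castSucc) ((v ∘ x) i.succ))
    rw [smul_smul, hs, one_smul] at hmem
    exact hmem

/-! ### A basis of the algebra -/

/-- Pairs of words of equal weight, the first starting with `a`: representatives of the pairs of
words of equal weight modulo simultaneous complement. -/
abbrev Pairs (n : ℕ) : Type :=
  {p : (Fin (n + 1) → Bool) × (Fin (n + 1) → Bool) // wt p.1 = wt p.2 ∧ p.1 0 = false}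

lemma linearIndependent_pairUnit (n : ℕ) :
    LinearIndependent k (fun p : Pairs n => pairUnit k p.1.1 p.1.2) := by
  rw [Fintype.linearIndependent_iff]
  intro g hg q
  have h := congrFun (LinearMap.congr_fun hg (Pi.single q.1.2 1)) q.1.1
  rw [LinearMap.sum_apply, Finset.sum_apply, Finset.sum_eq_single q] at h
  · have : q.1.1 ≠ flipWord q.1.1 := ne_flipWord _
    simpa [pairUnit_apply, this] using h
  · intro p _ hp
    have h1 : q.1.1 ≠ flipWord p.1.1 := fun h => by
      have h0 := congrFun h 0
      simp [flipWord, p.2.2, q.2.2] at h0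
    simp only [LinearMap.smul_apply, Pi.smul_apply, pairUnit_apply, h1, if_false, add_zero]
    split_ifs with h2
    · have h3 : p.1.2 ≠ q.1.2 := fun h3 => hp (Subtype.ext (Prod.ext h2.symm h3))
      simp [h3]
    · simp
  · simp

lemma pairUnit_mem_span (n : ℕ) {u v : Fin (n + 1) → Bool} (h : wt u = wt v) :
    pairUnit k u v ∈
      Submodule.span k (Set.range fun p : Pairs n => pairUnit k p.1.1 p.1.2) := by
  cases h0 : u 0
  · exact Submodule.subset_span ⟨⟨(u, v), h, h0⟩, rfl⟩
  · have := pairUnit_flipWord k (flipWord u) (flipWord v)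
    rw [flipWord_flipWord, flipWord_flipWord] at this
    rw [this]
    refine Submodule.smul_mem _ _ (Submodule.subset_span ⟨⟨(flipWord u, flipWord v), ?_, ?_⟩, rfl⟩)
    · simp [wt_flipWord, h]
    · simp [flipWord, h0]

/-- The identity is the sum of the projections `pairUnit k u u` over the words `u` starting with
`a`. -/
lemma one_mem_span (n : ℕ) :
    (1 : Module.End k (TP k (n + 1))) ∈
      Submodule.span k (Set.range fun p : Pairs n => pairUnit k p.1.1 p.1.2) := by
  have : (1 : Module.End k (TP k (n + 1))) =
      ∑ u : {u : Fin (n + 1) → Bool // u 0 = false}, pairUnit k u.1 u.1 := by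
    refine LinearMap.ext fun f => funext fun w => ?_
    rw [LinearMap.sum_apply, Finset.sum_apply]
    -- The only summand not vanishing at `w` is the one of whichever of `w`, `w̄` starts with `a`.
    cases h0 : w 0
    · rw [Finset.sum_eq_single ⟨w, h0⟩]
      · simp [pairUnit_apply, ne_flipWord]
      · rintro ⟨u, hu⟩ - hne
        have h1 : w ≠ u := fun h => hne (Subtype.ext h.symm)
        have h2 : w ≠ flipWord u := by rintro rfl; simp [flipWord, hu] at h0
        simp [pairUnit_apply, h1, h2]
      · simp
    · rw [Finset.sum_eq_single ⟨flipWord w, by simp [flipWord, h0]⟩]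
      · simp [pairUnit_apply, ne_flipWord, flipWord_flipWord, sgn_mul_self]
      · rintro ⟨u, hu⟩ - hne
        have h1 : w ≠ u := by rintro rfl; simp [hu] at h0
        have h2 : w ≠ flipWord u := by
          rintro rfl; exact hne (Subtype.ext (flipWord_flipWord u).symm)
        simp [pairUnit_apply, h1, h2]
      · simp
  rw [this]
  exact Submodule.sum_mem _ fun u _ => pairUnit_mem_span k n rfl

lemma adjoin_eq_span (h2 : (2 : k) ≠ 0) (n : ℕ) :
    Subalgebra.toSubmodule (Algebra.adjoin k (Set.range (Sbraid k n))) =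
      Submodule.span k (Set.range fun p : Pairs n => pairUnit k p.1.1 p.1.2) := by
  set V := Submodule.span k (Set.range fun p : Pairs n => pairUnit k p.1.1 p.1.2) with hV
  apply le_antisymm
  · intro x hx
    -- The span is a left ideal for the algebra, and contains `1`.
    have key : ∀ y ∈ V, x * y ∈ V := by
      rw [Subalgebra.mem_toSubmodule] at hx
      induction hx using Algebra.adjoin_induction with
      | mem x hx =>
        obtain ⟨i, rfl⟩ := hx
        intro y hy
        induction hy using Submodule.span_induction with
        | mem y hy =>
          obtain ⟨p, rfl⟩ := hy
          rw [Sbraid_mul_pairUnit]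
          exact V.smul_mem _ (pairUnit_mem_span k n ((wt_comp_perm _ _).trans p.2.1))
        | zero => simp
        | add y z _ _ h h' => rw [mul_add]; exact V.add_mem h h'
        | smul c y _ h => rw [mul_smul_comm]; exact V.smul_mem _ h
      | algebraMap r =>
        intro y hy
        rw [← Algebra.smul_def]
        exact V.smul_mem _ hy
      | add x x' hx hx' h h' =>
        intro y hy
        rw [add_mul]
        exact V.add_mem (h y hy) (h' y hy)
      | mul x x' hx hx' h h' =>
        intro y hy
        rw [mul_assoc]
        exact h _ (h' y hy)
    simpa using key 1 (one_mem_span k n)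
  · rw [hV, Submodule.span_le]
    rintro _ ⟨p, rfl⟩
    exact pairUnit_mem k h2 n p.2.1

/-! ### Counting pairs of words of equal weight -/

lemma card_wt (N j : ℕ) : Fintype.card {u : Fin N → Bool // wt u = j} = N.choose j := by
  have h : Fintype.card {s : Finset (Fin N) // s.card = j} = N.choose j := by
    rw [Fintype.card_finset_len, Fintype.card_fin]
  rw [← h]
  refine Fintype.card_congr
    { toFun := fun u => ⟨Finset.univ.filter (fun i => u.1 i = true), ?_⟩
      invFun := fun s => ⟨fun i => decide (i ∈ s.1), ?_⟩
      left_inv := fun u => ?_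
      right_inv := fun s => ?_ }
  · exact (Fintype.card_subtype _).symm.trans u.2
  · exact (Fintype.card_subtype _).trans (by simpa using s.2)
  · ext i; simp
  · ext i; simp

lemma card_eq_wt (N : ℕ) :
    Fintype.card {p : (Fin N → Bool) × (Fin N → Bool) // wt p.1 = wt p.2} =
      (2 * N).choose N := by
  have hle : ∀ u : Fin N → Bool, wt u < N + 1 := fun u =>
    Nat.lt_succ_of_le ((Fintype.card_subtype_le _).trans (Fintype.card_fin N).le)
  let e : {p : (Fin N → Bool) × (Fin N → Bool) // wt p.1 = wt p.2} ≃
      Σ j : Fin (N + 1), {u : Fin N → Bool // wt u = j} × {u : Fin N → Bool // wt u = j} :=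
    { toFun := fun p => ⟨⟨wt p.1.1, hle _⟩, ⟨p.1.1, rfl⟩, ⟨p.1.2, p.2.symm⟩⟩
      invFun := fun q => ⟨(q.2.1.1, q.2.2.1), q.2.1.2.trans q.2.2.2.symm⟩
      left_inv := fun p => rfl
      right_inv := by
        rintro ⟨⟨j, hj⟩, ⟨u, hu⟩, ⟨v, hv⟩⟩
        dsimp at hu hv
        subst hu
        rfl }
  rw [Fintype.card_congr e, Fintype.card_sigma, ← Nat.sum_range_choose_sq, Finset.sum_range]
  refine Finset.sum_congr rfl fun j _ => ?_
  rw [Fintype.card_prod, card_wt, sq]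

lemma two_mul_card_pairs (n : ℕ) :
    2 * Fintype.card (Pairs n) = (2 * (n + 1)).choose (n + 1) := by
  rw [← card_eq_wt, ← Fintype.card_bool, ← Fintype.card_prod]
  refine Fintype.card_congr
    { toFun := fun q => bif q.1 then ⟨(flipWord q.2.1.1, flipWord q.2.1.2), by
          simp only [wt_flipWord, q.2.2.1]⟩ else ⟨q.2.1, q.2.2.1⟩
      invFun := fun p => if h : p.1.1 0 = false then (false, ⟨p.1, p.2, h⟩) else
        (true, ⟨(flipWord p.1.1, flipWord p.1.2), by simp only [wt_flipWord, p.2],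
          by simpa [flipWord] using h⟩)
      left_inv := ?_
      right_inv := ?_ }
  · rintro ⟨b, ⟨⟨u, v⟩, h, h0⟩⟩
    have h0' : u 0 = false := h0
    have h1 : flipWord u 0 = true := by simp [flipWord, h0']
    cases b <;> simp [h0', h1, flipWord_flipWord]
  · rintro ⟨⟨u, v⟩, h⟩
    cases h0 : u 0 <;> simp [h0, flipWord_flipWord]

/-- (char `k ≠ 2`) for every `n ≥ 1` (written `n+1`), the dimension `D` of the
unital `k`-subalgebra of `End_k(M^{⊗(n+1)})` generated by `S₁,…,S_n` alone satisfies
`2·D = binomial(2(n+1), n+1)`.  (This is the codimension `c_{n+1,n+1}(M)` of the polynomial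
identities of `M` regarded as an `∅`-magma in the braided category of Yetter–Drinfel'd
modules over `kC₂`.) -/
theorem stmt14 (hchar : ringChar k ≠ 2) (n : ℕ) :
    2 * Module.finrank k
        (Algebra.adjoin k (Set.range (Sbraid k n)) :
          Subalgebra k (Module.End k (TP k (n + 1)))) =
      Nat.choose (2 * (n + 1)) (n + 1) := by
  have h2 : (2 : k) ≠ 0 := Ring.two_ne_zero hchar
  rw [← two_mul_card_pairs, ← finrank_span_eq_card (linearIndependent_pairUnit k n),
    ← adjoin_eq_span k h2 n]
  rfl

end
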